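/- arXiv:2202.04634 — 2 statements merged into one kernel-verified Lean document; each statement's English description precedes it below -/
import Mathlib

section
/- Fix α > 0 and δ ∈ (0,1). Under assumptions (A1)–(A6), with probability at least 1−δ over the datasets, the PRO-RL output ŵ satisfies L_α(v*_α, w*_α) − L_α(v*_α, ŵ) ≤ 2·ε_stat. -/
open MeasureTheory
open scoped BigOperators ENNReal

namespace ProRL

/-- The discrete measure on a type induced by a real-valued weight function. -/
noncomputable def discMeasure {X : Type*} [MeasurableSpace X] (p : X → ℝ) : Measure X :=
  Measure.sum fun x => ENNReal.ofReal (p x) • Measure.dirac x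

variable {S A : Type*} [Fintype S] [Fintype A]

/-- The `t`-step state-action distribution of policy `π` started from `μ0`. -/
noncomputable def saDist (P : S → A → S → ℝ) (μ0 : S → ℝ) (π : S → A → ℝ) :
    ℕ → S → A → ℝ
  | 0 => fun s a => μ0 s * π s a
  | t + 1 => fun s a =>
      (∑ s' : S, ∑ a' : A, saDist P μ0 π t s' a' * P s' a' s) * π s a

/-- The discounted state-action occupancy `d^π(s,a)`. -/
noncomputable def occ (P : S → A → S → ℝ) (μ0 : S → ℝ) (γ : ℝ) (π : S → A → ℝ)
    (s : S) (a : A) : ℝ :=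
  (1 - γ) * ∑' t : ℕ, γ ^ t * saDist P μ0 π t s a

/-- The (normalized) expected discounted return `J(π) = E_{d^π}[r]`. -/
noncomputable def Jret (P : S → A → S → ℝ) (r : S → A → ℝ) (μ0 : S → ℝ) (γ : ℝ)
    (π : S → A → ℝ) : ℝ :=
  ∑ s : S, ∑ a : A, occ P μ0 γ π s a * r s a

/-- `π` is a (stationary, stochastic) policy. -/
def IsPolicy (π : S → A → ℝ) : Prop :=
  (∀ s a, 0 ≤ π s a) ∧ ∀ s, ∑ a : A, π s a = 1

/-- The Bellman residual `e_v(s,a) = r(s,a) + γ ∑_{s'} P(s'|s,a) v(s') − v(s)`. -/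
noncomputable def eV (P : S → A → S → ℝ) (r : S → A → ℝ) (γ : ℝ) (v : S → ℝ)
    (s : S) (a : A) : ℝ :=
  r s a + γ * ∑ s' : S, P s a s' * v s' - v s

/-- The population Lagrangian `L_α(v,w)`. -/
noncomputable def Lag (P : S → A → S → ℝ) (r : S → A → ℝ) (μ0 : S → ℝ) (γ : ℝ)
    (dD : S → A → ℝ) (f : ℝ → ℝ) (α : ℝ) (v : S → ℝ) (w : S → A → ℝ) : ℝ :=
  (1 - γ) * ∑ s : S, μ0 s * v s
    - α * ∑ s : S, ∑ a : A, dD s a * f (w s a)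
    + ∑ s : S, ∑ a : A, dD s a * (w s a * eV P r γ v s a)

/-- The empirical Lagrangian `L̂_α(v,w)` built from the transition dataset `D`
(`D i = ((sᵢ,aᵢ), s'ᵢ)`, with `rᵢ = r sᵢ aᵢ`) and initial-state dataset `D0`. -/
noncomputable def empLag (r : S → A → ℝ) (γ : ℝ) (f : ℝ → ℝ) (α : ℝ) {n n0 : ℕ}
    (D : Fin n → (S × A) × S) (D0 : Fin n0 → S) (v : S → ℝ) (w : S → A → ℝ) : ℝ :=
  (1 - γ) * ((n0 : ℝ)⁻¹ * ∑ j : Fin n0, v (D0 j))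
    - α * ((n : ℝ)⁻¹ * ∑ i : Fin n, f (w (D i).1.1 (D i).1.2))
    + (n : ℝ)⁻¹ * ∑ i : Fin n,
        w (D i).1.1 (D i).1.2 *
          (r (D i).1.1 (D i).1.2 + γ * v (D i).2 - v (D i).1.1)

/-- Per-state normalization of a state-action weight into a policy
(uniform where the state marginal is not positive). -/
noncomputable def normPolicy (d : S → A → ℝ) (s : S) (a : A) : ℝ :=
  if 0 < ∑ a' : A, d s a' then d s a / ∑ a' : A, d s a'
  else (Fintype.card A : ℝ)⁻¹

/-- Policy extraction from a density ratio `w` and a behavior policy `piD`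
(uniform where the normalizer vanishes). -/
noncomputable def extractPolicy (piD w : S → A → ℝ) (s : S) (a : A) : ℝ :=
  if 0 < ∑ a' : A, w s a' * piD s a' then
    w s a * piD s a / ∑ a' : A, w s a' * piD s a'
  else (Fintype.card A : ℝ)⁻¹

/-- Behavior policy `π_D(a|s)` obtained from the data distribution `d^D`. -/
noncomputable def behPolicy (dD : S → A → ℝ) : S → A → ℝ := normPolicy dD

/-- The state-action measure `d(s,a) = w(s,a)·d^D(s,a)`. -/
noncomputable def dstar (dD w : S → A → ℝ) : S → A → ℝ := fun s a => w s a * dD s a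

/-- The weighted `L²(d^D)` norm of a state-action function. -/
noncomputable def l2nrm (dD g : S → A → ℝ) : ℝ :=
  Real.sqrt (∑ s : S, ∑ a : A, dD s a * g s a ^ 2)

/-- `‖π(·|s) − π'(·|s)‖₁`. -/
noncomputable def l1Pol (π π' : S → A → ℝ) (s : S) : ℝ := ∑ a : A, |π s a - π' s a|

/-- `E_{s ∼ d}[‖π(·|s) − π'(·|s)‖₁]` where `d` is a state-action distribution. -/
noncomputable def expL1 (d π π' : S → A → ℝ) : ℝ :=
  ∑ s : S, (∑ a : A, d s a) * l1Pol π π' s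

/-- The statistical error term `ε_stat`. -/
noncomputable def epsStat (γ α Bv Bf Bw Be δ : ℝ) (nV nW n n0 : ℕ) : ℝ :=
  (1 - γ) * Bv * Real.sqrt (2 * Real.log (4 * (nV : ℝ) / δ) / (n0 : ℝ))
    + (α * Bf + Bw * Be) *
        Real.sqrt (2 * Real.log (4 * ((nV : ℝ) * (nW : ℝ)) / δ) / (n : ℝ))

/-- The Bellman flow equations for a state-action measure `d`. -/
def BellmanFlow (P : S → A → S → ℝ) (μ0 : S → ℝ) (γ : ℝ) (d : S → A → ℝ) : Prop :=
  ∀ s : S, ∑ a : A, d s a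
    = (1 - γ) * μ0 s + γ * ∑ s' : S, ∑ a' : A, P s' a' s * d s' a'

/-- `(v,w)` is a saddle point of `max_{w ≥ 0} min_v L_α(v,w)`. -/
def IsSaddle (P : S → A → S → ℝ) (r : S → A → ℝ) (μ0 : S → ℝ) (γ : ℝ)
    (dD : S → A → ℝ) (f : ℝ → ℝ) (α : ℝ) (v : S → ℝ) (w : S → A → ℝ) : Prop :=
  (∀ s a, 0 ≤ w s a) ∧
  (∀ v' : S → ℝ, Lag P r μ0 γ dD f α v w ≤ Lag P r μ0 γ dD f α v' w) ∧
  (∀ w' : S → A → ℝ, (∀ s a, 0 ≤ w' s a) →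
    Lag P r μ0 γ dD f α v w' ≤ Lag P r μ0 γ dD f α v w)

/-- `(v,w)` is a saddle point of `max_{0 ≤ w ≤ Bw} min_v L_α(v,w)` (constrained LP). -/
def IsSaddleB (P : S → A → S → ℝ) (r : S → A → ℝ) (μ0 : S → ℝ) (γ : ℝ)
    (dD : S → A → ℝ) (f : ℝ → ℝ) (α Bw : ℝ) (v : S → ℝ) (w : S → A → ℝ) : Prop :=
  (∀ s a, 0 ≤ w s a ∧ w s a ≤ Bw) ∧
  (∀ v' : S → ℝ, Lag P r μ0 γ dD f α v w ≤ Lag P r μ0 γ dD f α v' w) ∧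
  (∀ w' : S → A → ℝ, (∀ s a, 0 ≤ w' s a ∧ w' s a ≤ Bw) →
    Lag P r μ0 γ dD f α v w' ≤ Lag P r μ0 γ dD f α v w)

/-- `(vhat, what)` is an exact max-min point of the empirical Lagrangian over `V × W`:
`vhat ∈ argmin_{v ∈ V} L̂(v, what)` and `what ∈ argmax_{w ∈ W} min_{v ∈ V} L̂(v, w)`. -/
def IsProRLOutput (r : S → A → ℝ) (γ : ℝ) (f : ℝ → ℝ) (α : ℝ)
    (V : Finset (S → ℝ)) (W : Finset (S → A → ℝ)) {n n0 : ℕ}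
    (D : Fin n → (S × A) × S) (D0 : Fin n0 → S)
    (vhat : S → ℝ) (what : S → A → ℝ) : Prop :=
  vhat ∈ V ∧ what ∈ W ∧
  (∀ v ∈ V, empLag r γ f α D D0 vhat what ≤ empLag r γ f α D D0 v what) ∧
  ∀ w ∈ W, ∀ vw ∈ V,
    (∀ v ∈ V, empLag r γ f α D D0 vw w ≤ empLag r γ f α D D0 v w) →
      empLag r γ f α D D0 vw w ≤ empLag r γ f α D D0 vhat what

/-- Weight of a transition tuple `((s,a),s')` under `(s,a) ∼ d^D`, `s' ∼ P(·|s,a)`. -/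
noncomputable def tupleWeight (P : S → A → S → ℝ) (dD : S → A → ℝ)
    (x : (S × A) × S) : ℝ :=
  dD x.1.1 x.1.2 * P x.1.1 x.1.2 x.2

/-- The joint law of the transition dataset `D` (i.i.d. from `d^D ⊗ P`) and the
initial-state dataset `D0` (i.i.d. from `μ0`). -/
noncomputable def dataMeasure [MeasurableSpace S] [MeasurableSpace A]
    (P : S → A → S → ℝ) (dD : S → A → ℝ) (μ0 : S → ℝ) (n n0 : ℕ) :
    Measure ((Fin n → (S × A) × S) × (Fin n0 → S)) :=
  (Measure.pi fun _ : Fin n => discMeasure (tupleWeight P dD)).prod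
    (Measure.pi fun _ : Fin n0 => discMeasure μ0)

/-- The joint law of datasets `D1`, `D2` (both i.i.d. from `d^D ⊗ P`) and `D0`
(i.i.d. from `μ0`), used by PRO-RL-BC. -/
noncomputable def dataMeasure3 [MeasurableSpace S] [MeasurableSpace A]
    (P : S → A → S → ℝ) (dD : S → A → ℝ) (μ0 : S → ℝ) (n1 n2 n0 : ℕ) :
    Measure ((Fin n1 → (S × A) × S) × (Fin n2 → (S × A) × S) × (Fin n0 → S)) :=
  (Measure.pi fun _ : Fin n1 => discMeasure (tupleWeight P dD)).prod
    ((Measure.pi fun _ : Fin n2 => discMeasure (tupleWeight P dD)).prod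
      (Measure.pi fun _ : Fin n0 => discMeasure μ0))

/-- `v` is the optimal value function: it satisfies the Bellman optimality equation. -/
def IsOptValue [Nonempty A] (P : S → A → S → ℝ) (r : S → A → ℝ) (γ : ℝ)
    (v : S → ℝ) : Prop :=
  ∀ s : S, v s = Finset.univ.sup' Finset.univ_nonempty
    (fun a : A => r s a + γ * ∑ s' : S, P s a s' * v s')

/-- Basic assumptions on the MDP, the regularizer-free data, and the data distribution. -/
structure MDPAssumptions (P : S → A → S → ℝ) (r : S → A → ℝ) (μ0 : S → ℝ) (γ : ℝ)
    (dD : S → A → ℝ) : Prop where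
  P_nonneg : ∀ s a s', 0 ≤ P s a s'
  P_sum : ∀ s a, ∑ s' : S, P s a s' = 1
  r_nonneg : ∀ s a, 0 ≤ r s a
  r_le_one : ∀ s a, r s a ≤ 1
  γ_nonneg : 0 ≤ γ
  γ_lt_one : γ < 1
  μ0_pos : ∀ s, 0 < μ0 s
  μ0_sum : ∑ s : S, μ0 s = 1
  dD_nonneg : ∀ s a, 0 ≤ dD s a
  dD_sum : ∑ s : S, ∑ a : A, dD s a = 1

/-- Regularity of the regularizer `f`: continuously differentiable with derivative `f'`,
`M_f`-strongly convex, and with `|f'| ≤ Bf'`, `|f| ≤ Bf` on `[0, Bw]`. -/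
structure RegAssumptions (f f' : ℝ → ℝ) (Mf Bw Bf' Bf : ℝ) : Prop where
  deriv : ∀ x, HasDerivAt f (f' x) x
  strong : StrongConvexOn Set.univ Mf f
  Mf_pos : 0 < Mf
  f'_bdd : ∀ x, 0 ≤ x → x ≤ Bw → |f' x| ≤ Bf'
  f_bdd : ∀ x, 0 ≤ x → x ≤ Bw → |f x| ≤ Bf

/-- `w` is an optimal density ratio of the unregularized LP (the set `W*₀`). -/
def OptRatio (P : S → A → S → ℝ) (r : S → A → ℝ) (μ0 : S → ℝ) (γ : ℝ)
    (dD : S → A → ℝ) (w : S → A → ℝ) : Prop :=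
  (∀ s a, 0 ≤ w s a) ∧ BellmanFlow P μ0 γ (dstar dD w) ∧
  ∀ w' : S → A → ℝ, (∀ s a, 0 ≤ w' s a) → BellmanFlow P μ0 γ (dstar dD w') →
    ∑ s : S, ∑ a : A, dstar dD w' s a * r s a
      ≤ ∑ s : S, ∑ a : A, dstar dD w s a * r s a

/-!
The empirical Lagrangian is the mean over initial states of `(1 - γ) v` plus the mean over
transition tuples of a bounded function `tupleLag`, and its expectation is the population
Lagrangian. By Hoeffding's inequality and a union bound over `V` and `V × W`, each at level `δ / 2`,
the two Lagrangians are within `ε_stat` of each other on all of `V × W` with probability `1 - δ`.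
On that event two applications of the uniform bound, one at `(·, w*)` and one at `(v*, ŵ)`,
sandwich the empirical max-min value and give the gap `2 ε_stat`.
-/

section MaxMin

/-- `(vhat, what)` attains `max_{w ∈ W} min_{v ∈ V} F v w`. The value `min_{v ∈ V} F v w` is named
through its minimizers `u`, so no infimum is taken. -/
def IsMaxMinOn {Y Z : Type*} (F : Y → Z → ℝ) (V : Finset Y) (W : Finset Z) (vhat : Y) (what : Z) :
    Prop :=
  vhat ∈ V ∧ what ∈ W ∧ (∀ v ∈ V, F vhat what ≤ F v what) ∧
    ∀ w ∈ W, ∀ u ∈ V, (∀ v ∈ V, F u w ≤ F v w) → F u w ≤ F vhat what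

theorem IsMaxMinOn.sub_le_two_mul {Y Z : Type*} {F L : Y → Z → ℝ} {V : Finset Y} {W : Finset Z}
    {vhat v₀ : Y} {what w₀ : Z} {ε : ℝ} (hout : IsMaxMinOn F V W vhat what)
    (hmin : ∀ v ∈ V, L v₀ w₀ ≤ L v w₀) (hv₀ : v₀ ∈ V) (hw₀ : w₀ ∈ W)
    (hclose : ∀ v ∈ V, ∀ w ∈ W, |F v w - L v w| ≤ ε) :
    L v₀ w₀ - L v₀ what ≤ 2 * ε := by
  obtain ⟨-, hwhat, hvhat_min, hmax⟩ := hout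
  obtain ⟨u, hu, hu_min⟩ := V.exists_min_image (F · w₀) ⟨v₀, hv₀⟩
  have lower : L v₀ w₀ - ε ≤ F vhat what := calc
    L v₀ w₀ - ε ≤ L u w₀ - ε := sub_le_sub_right (hmin u hu) ε
    _ ≤ F u w₀ := by linarith [(abs_le.1 (hclose u hu w₀ hw₀)).1]
    _ ≤ F vhat what := hmax w₀ hw₀ u hu hu_min
  have upper : F vhat what ≤ L v₀ what + ε := calc
    F vhat what ≤ F v₀ what := hvhat_min v₀ hv₀
    _ ≤ L v₀ what + ε := by linarith [(abs_le.1 (hclose v₀ hv₀ what hwhat)).2]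
  linarith

end MaxMin

section Concentration

open ProbabilityTheory
open scoped NNReal

variable {Ω : Type*} [MeasurableSpace Ω] {μ : Measure Ω}

theorem measureReal_le_abs_le_of_hasSubgaussianMGF {X : Ω → ℝ} {c : ℝ≥0}
    (hX : HasSubgaussianMGF X c μ) {ε : ℝ} (hε : 0 ≤ ε) :
    μ.real {ω | ε ≤ |X ω|} ≤ 2 * Real.exp (-ε ^ 2 / (2 * c)) :=
  calc μ.real {ω | ε ≤ |X ω|} = μ.real ({ω | ε ≤ X ω} ∪ {ω | ε ≤ (-X) ω}) := by
        simp only [le_abs, Set.ofPred_or, Pi.neg_apply]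
    _ ≤ μ.real {ω | ε ≤ X ω} + μ.real {ω | ε ≤ (-X) ω} := measureReal_union_le _ _
    _ ≤ 2 * Real.exp (-ε ^ 2 / (2 * c)) := by
        linarith [hX.measure_ge_le hε, hX.neg.measure_ge_le hε]

theorem measureReal_sqrt_lt_abs_le_of_hasSubgaussianMGF [IsFiniteMeasure μ] {X : Ω → ℝ} {c : ℝ≥0}
    (hX : HasSubgaussianMGF X c μ) (L : ℝ) :
    μ.real {ω | √(2 * c * L) < |X ω|} ≤ 2 * Real.exp (-L) := by
  rcases eq_or_ne c 0 with rfl | hc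
  · have hzero : μ.real {ω | √(2 * (0 : ℝ≥0) * L) < |X ω|} = 0 := by
      rw [measureReal_eq_zero_iff]
      refine measure_mono_null (fun ω hω => ?_) (ae_iff.1 hX.ae_eq_zero_of_hasSubgaussianMGF_zero)
      simpa using hω
    rw [hzero]
    positivity
  · have hc' : (0 : ℝ) < 2 * c := by positivity
    calc μ.real {ω | √(2 * c * L) < |X ω|} ≤ μ.real {ω | √(2 * c * L) ≤ |X ω|} :=
          measureReal_mono (Set.ofPred_subset_ofPred.2 fun _ => le_of_lt)
      _ ≤ 2 * Real.exp (-√(2 * c * L) ^ 2 / (2 * c)) :=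
          measureReal_le_abs_le_of_hasSubgaussianMGF hX (Real.sqrt_nonneg _)
      _ ≤ 2 * Real.exp (-L) := by
          gcongr
          rw [neg_div, neg_le_neg_iff, le_div_iff₀' hc']
          exact (le_max_left _ _).trans_eq Real.sq_sqrt'.symm

theorem measureReal_exists_sqrt_lt_abs_le_of_hasSubgaussianMGF [IsFiniteMeasure μ] {κ : Type*}
    {s : Finset κ} {X : κ → Ω → ℝ} {c : ℝ≥0} (hX : ∀ k ∈ s, HasSubgaussianMGF (X k) c μ)
    {η : ℝ} (hη : 0 < η) :
    μ.real {ω | ∃ k ∈ s, √(2 * c * Real.log (2 * s.card / η)) < |X k ω|} ≤ η := by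
  rcases s.eq_empty_or_nonempty with rfl | hs
  · simpa using hη.le
  set ε := √(2 * c * Real.log (2 * s.card / η))
  calc μ.real {ω | ∃ k ∈ s, ε < |X k ω|} = μ.real (⋃ k ∈ s, {ω | ε < |X k ω|}) := by
        congr 1
        ext ω
        simp
    _ ≤ ∑ k ∈ s, μ.real {ω | ε < |X k ω|} := measureReal_biUnion_finset_le _ _
    _ ≤ ∑ _k ∈ s, 2 * Real.exp (-Real.log (2 * s.card / η)) :=
        Finset.sum_le_sum fun k hk => measureReal_sqrt_lt_abs_le_of_hasSubgaussianMGF (hX k hk) _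
    _ = η := by
        rw [Real.exp_neg, Real.exp_log (by positivity), Finset.sum_const, nsmul_eq_mul]
        field_simp

variable {ι : Type*} [Fintype ι]

theorem hasSubgaussianMGF_expect_of_iIndepFun {X : ι → Ω → ℝ} {c : ℝ≥0} (hind : iIndepFun X μ)
    (hX : ∀ i, HasSubgaussianMGF (X i) c μ) :
    HasSubgaussianMGF (fun ω => 𝔼 i, X i ω) (c / Fintype.card ι) μ := by
  have hsum := (HasSubgaussianMGF.sum_of_iIndepFun hind (s := Finset.univ)
    fun i _ => hX i).const_mul (Fintype.card ι : ℝ)⁻¹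
  simp only [← div_eq_inv_mul, ← Fintype.expect_eq_sum_div_card] at hsum
  convert hsum using 1
  apply NNReal.eq
  change (c : ℝ) / Fintype.card ι = (Fintype.card ι : ℝ)⁻¹ ^ 2 * ((∑ _i : ι, c : ℝ≥0) : ℝ)
  simp only [Finset.sum_const, Finset.card_univ, nsmul_eq_mul, NNReal.coe_mul, NNReal.coe_natCast]
  field_simp

variable [IsProbabilityMeasure μ]

theorem hasSubgaussianMGF_expect_pi {g : Ω → ℝ} {c : ℝ≥0} (hg : HasSubgaussianMGF g c μ) :
    HasSubgaussianMGF (fun D : ι → Ω => 𝔼 i, g (D i)) (c / Fintype.card ι)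
      (Measure.pi fun _ => μ) :=
  hasSubgaussianMGF_expect_of_iIndepFun (iIndepFun_pi fun _ => hg.aemeasurable) fun i =>
    HasSubgaussianMGF.of_map (measurable_pi_apply i).aemeasurable
      (by rwa [(measurePreserving_eval (fun _ : ι => μ) i).map_eq])

theorem hasSubgaussianMGF_sub_integral_of_abs_le {g : Ω → ℝ} (hg : AEMeasurable g μ) {B : ℝ}
    (hB : ∀ᵐ ω ∂μ, |g ω| ≤ B) :
    HasSubgaussianMGF (fun ω => g ω - ∫ x, g x ∂μ) (‖B‖₊ ^ 2) μ := by
  have hIcc := hasSubgaussianMGF_of_mem_Icc hg (hB.mono fun _ => abs_le.1)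
  have hwidth : ‖B - -B‖₊ / 2 = ‖B‖₊ := by
    rw [sub_neg_eq_add, ← two_mul, nnnorm_mul]
    simp
  rwa [hwidth] at hIcc

theorem hasSubgaussianMGF_expect_sub_integral_of_abs_le [Nonempty ι] {g : Ω → ℝ}
    (hg : AEMeasurable g μ) {B : ℝ} (hB : ∀ᵐ ω ∂μ, |g ω| ≤ B) :
    HasSubgaussianMGF (fun D : ι → Ω => 𝔼 i, g (D i) - ∫ x, g x ∂μ)
      (‖B‖₊ ^ 2 / Fintype.card ι) (Measure.pi fun _ => μ) := by
  simpa only [Finset.expect_sub_distrib, Fintype.expect_const] using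
    hasSubgaussianMGF_expect_pi (ι := ι) (hasSubgaussianMGF_sub_integral_of_abs_le hg hB)

theorem measureReal_pi_exists_lt_abs_expect_sub_integral_le [Nonempty ι] {κ : Type*}
    {s : Finset κ} {g : κ → Ω → ℝ} (hg : ∀ k ∈ s, AEMeasurable (g k) μ) {B : ℝ}
    (hB : ∀ k ∈ s, ∀ x, |g k x| ≤ B) {η : ℝ} (hη : 0 < η) :
    (Measure.pi fun _ : ι => μ).real {D | ∃ k ∈ s,
        B * √(2 * Real.log (2 * s.card / η) / Fintype.card ι)
          < |𝔼 i, g k (D i) - ∫ x, g k x ∂μ|} ≤ η := by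
  refine (measureReal_mono ?_).trans <| measureReal_exists_sqrt_lt_abs_le_of_hasSubgaussianMGF
    (fun k hk => hasSubgaussianMGF_expect_sub_integral_of_abs_le (ι := ι) (hg k hk)
      (.of_forall (hB k hk))) hη
  rintro D ⟨k, hk, hlt⟩
  refine ⟨k, hk, lt_of_eq_of_lt ?_ hlt⟩
  have hB0 : 0 ≤ B := (abs_nonneg _).trans (hB k hk (D (Classical.arbitrary ι)))
  have hfactor : 2 * ((‖B‖₊ ^ 2 / Fintype.card ι : ℝ≥0) : ℝ) * Real.log (2 * s.card / η)
      = B ^ 2 * (2 * Real.log (2 * s.card / η) / Fintype.card ι) := by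
    simp only [NNReal.coe_div, NNReal.coe_pow, coe_nnnorm, Real.norm_eq_abs, sq_abs,
      NNReal.coe_natCast]
    ring
  rw [hfactor, Real.sqrt_mul (sq_nonneg B), Real.sqrt_sq hB0]

end Concentration

section ProbabilityBounds

variable {X Y : Type*} [MeasurableSpace X] [MeasurableSpace Y]

theorem measureReal_prod_or_le (μ : Measure X) (ν : Measure Y) [IsProbabilityMeasure μ]
    [IsProbabilityMeasure ν] (p : X → Prop) (q : Y → Prop) :
    (μ.prod ν).real {ω | p ω.1 ∨ q ω.2} ≤ μ.real {x | p x} + ν.real {y | q y} := by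
  have hcover : {ω : X × Y | p ω.1 ∨ q ω.2} = {x | p x} ×ˢ Set.univ ∪ Set.univ ×ˢ {y | q y} := by
    ext ω
    simp
  rw [hcover]
  refine (measureReal_union_le _ _).trans_eq ?_
  simp only [measureReal_prod_prod, probReal_univ, mul_one, one_mul]

theorem one_sub_ofReal_le_of_measureReal_compl_le {μ : Measure X} [IsProbabilityMeasure μ]
    {s : Set X} {δ : ℝ} (h : μ.real sᶜ ≤ δ) : 1 - ENNReal.ofReal δ ≤ μ s := by
  rw [tsub_le_iff_right]
  calc 1 = μ Set.univ := measure_univ.symm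
    _ ≤ μ s + μ sᶜ := measure_univ_le_add_compl s
    _ ≤ μ s + ENNReal.ofReal δ := by
        gcongr
        rw [← ofReal_measureReal]
        exact ENNReal.ofReal_le_ofReal h

end ProbabilityBounds

section DiscreteMeasure

variable {X : Type*} [MeasurableSpace X]

theorem isProbabilityMeasure_discMeasure {p : X → ℝ} (hp : ∀ x, 0 ≤ p x) (hsum : HasSum p 1) :
    IsProbabilityMeasure (discMeasure p) := by
  refine ⟨?_⟩
  simp [discMeasure, ← ENNReal.ofReal_tsum_of_nonneg hp hsum.summable, hsum.tsum_eq]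

theorem integral_discMeasure [Fintype X] [MeasurableSingletonClass X] {p : X → ℝ}
    (hp : ∀ x, 0 ≤ p x) (g : X → ℝ) : ∫ x, g x ∂(discMeasure p) = ∑ x, p x * g x := by
  rw [discMeasure, Measure.sum_fintype, integral_finsetSum_measure]
  · simp [hp]
  · intro x _
    exact (integrable_dirac (by simp)).smul_measure ENNReal.ofReal_ne_top

end DiscreteMeasure

section TupleLagrangian

/-- The contribution of one transition tuple `((s, a), s')` to the empirical Lagrangian: the
weighted sampled Bellman residual minus the regularization at `(s, a)`. -/
noncomputable def tupleLag {S A : Type*} (r : S → A → ℝ) (γ : ℝ) (f : ℝ → ℝ) (α : ℝ) (v : S → ℝ)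
    (w : S → A → ℝ) (x : (S × A) × S) : ℝ :=
  w x.1.1 x.1.2 * (r x.1.1 x.1.2 + γ * v x.2 - v x.1.1) - α * f (w x.1.1 x.1.2)

theorem empLag_eq_expect {S A : Type*} (r : S → A → ℝ) (γ : ℝ) (f : ℝ → ℝ) (α : ℝ) {n n0 : ℕ}
    (D : Fin n → (S × A) × S) (D0 : Fin n0 → S) (v : S → ℝ) (w : S → A → ℝ) :
    empLag r γ f α D D0 v w = (1 - γ) * 𝔼 j, v (D0 j) + 𝔼 i, tupleLag r γ f α v w (D i) := by
  simp only [empLag, tupleLag, Fintype.expect_eq_sum_div_card, Fintype.card_fin,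
    Finset.sum_sub_distrib, ← Finset.mul_sum]
  ring

theorem abs_add_mul_sub_le {ρ γ x y B : ℝ} (hρ : |ρ| ≤ 1) (hγ : 0 ≤ γ) (hx : |x| ≤ B)
    (hy : |y| ≤ B) : |ρ + γ * y - x| ≤ (1 + γ) * B + 1 :=
  calc |ρ + γ * y - x| ≤ |ρ| + |γ * y| + |x| :=
        (abs_sub _ _).trans (add_le_add_left (abs_add_le _ _) _)
    _ = |ρ| + γ * |y| + |x| := by rw [abs_mul, abs_of_nonneg hγ]
    _ ≤ 1 + γ * B + B := by gcongr
    _ = (1 + γ) * B + 1 := by ring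

theorem abs_tupleLag_le {S A : Type*} {r : S → A → ℝ} {γ : ℝ} (hr : ∀ s a, |r s a| ≤ 1)
    (hγ : 0 ≤ γ) {f : ℝ → ℝ} {α Bw Bf Bv : ℝ} (hα : 0 ≤ α)
    (hf : ∀ x, 0 ≤ x → x ≤ Bw → |f x| ≤ Bf) {v : S → ℝ} (hv : ∀ s, |v s| ≤ Bv)
    {w : S → A → ℝ} (hw : ∀ s a, 0 ≤ w s a ∧ w s a ≤ Bw) (x : (S × A) × S) :
    |tupleLag r γ f α v w x| ≤ α * Bf + Bw * ((1 + γ) * Bv + 1) := by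
  obtain ⟨⟨s, a⟩, s'⟩ := x
  obtain ⟨hw0, hwB⟩ := hw s a
  calc |tupleLag r γ f α v w ((s, a), s')|
      ≤ |w s a * (r s a + γ * v s' - v s)| + |α * f (w s a)| := abs_sub _ _
    _ = α * |f (w s a)| + w s a * |r s a + γ * v s' - v s| := by
        rw [abs_mul, abs_mul, abs_of_nonneg hw0, abs_of_nonneg hα, add_comm]
    _ ≤ α * Bf + Bw * ((1 + γ) * Bv + 1) :=
        add_le_add (mul_le_mul_of_nonneg_left (hf _ hw0 hwB) hα)
          (mul_le_mul hwB (abs_add_mul_sub_le (hr s a) hγ (hv s) (hv s')) (abs_nonneg _)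
            (hw0.trans hwB))

theorem sum_mul_tupleLag {S A : Type*} [Fintype S] {P : S → A → S → ℝ} {s : S} {a : A}
    (hP : ∑ s', P s a s' = 1) (r : S → A → ℝ) (γ : ℝ) (f : ℝ → ℝ) (α : ℝ) (v : S → ℝ)
    (w : S → A → ℝ) :
    ∑ s', P s a s' * tupleLag r γ f α v w ((s, a), s')
      = w s a * eV P r γ v s a - α * f (w s a) := by
  have hterm : ∀ s', P s a s' * tupleLag r γ f α v w ((s, a), s')
      = P s a s' * (w s a * (r s a - v s) - α * f (w s a))
        + w s a * γ * (P s a s' * v s') := fun s' => by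
    simp only [tupleLag]
    ring
  simp only [hterm, Finset.sum_add_distrib, ← Finset.sum_mul, ← Finset.mul_sum, hP, eV]
  ring

end TupleLagrangian

section UniformConvergence

variable {P : S → A → S → ℝ} {r : S → A → ℝ} {μ0 : S → ℝ} {γ : ℝ} {dD : S → A → ℝ}

theorem isProbabilityMeasure_discMeasure_init [MeasurableSpace S]
    (hMDP : MDPAssumptions P r μ0 γ dD) :
    IsProbabilityMeasure (discMeasure μ0) :=
  isProbabilityMeasure_discMeasure (fun s => (hMDP.μ0_pos s).le)
    (hMDP.μ0_sum ▸ hasSum_fintype μ0)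

theorem measureReal_exists_lt_abs_expect_init_le [MeasurableSpace S] [MeasurableSingletonClass S]
    (hMDP : MDPAssumptions P r μ0 γ dD) {Bv δ : ℝ} {V : Finset (S → ℝ)} {n0 : ℕ}
    (hV : ∀ v ∈ V, ∀ s, |v s| ≤ Bv) (hn0 : 0 < n0) (hδ : 0 < δ) :
    (Measure.pi fun _ : Fin n0 => discMeasure μ0).real {D0 | ∃ v ∈ V,
        Bv * √(2 * Real.log (4 * V.card / δ) / n0)
          < |𝔼 j, v (D0 j) - ∫ s, v s ∂(discMeasure μ0)|} ≤ δ / 2 := by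
  have := isProbabilityMeasure_discMeasure_init hMDP
  have : Nonempty (Fin n0) := Fin.pos_iff_nonempty.1 hn0
  have hoeffding := measureReal_pi_exists_lt_abs_expect_sub_integral_le (ι := Fin n0)
    (μ := discMeasure μ0) (s := V) (g := fun v => v)
    (fun _ _ => Measurable.of_discrete.aemeasurable) hV (half_pos hδ)
  rwa [Fintype.card_fin, show 2 * (V.card : ℝ) / (δ / 2) = 4 * V.card / δ by ring] at hoeffding

theorem tupleWeight_nonneg (hMDP : MDPAssumptions P r μ0 γ dD) (x : (S × A) × S) :
    0 ≤ tupleWeight P dD x :=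
  mul_nonneg (hMDP.dD_nonneg _ _) (hMDP.P_nonneg _ _ _)

theorem sum_tupleWeight_mul (P : S → A → S → ℝ) (dD : S → A → ℝ) (g : (S × A) × S → ℝ) :
    ∑ x, tupleWeight P dD x * g x = ∑ s, ∑ a, dD s a * ∑ s', P s a s' * g ((s, a), s') := by
  simp only [tupleWeight, Fintype.sum_prod_type, Finset.mul_sum, mul_assoc]

theorem sum_tupleWeight (hMDP : MDPAssumptions P r μ0 γ dD) : ∑ x, tupleWeight P dD x = 1 := by
  simpa only [mul_one, hMDP.P_sum, hMDP.dD_sum] using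
    sum_tupleWeight_mul P dD fun _ => 1

variable [MeasurableSpace S] [MeasurableSpace A]

theorem isProbabilityMeasure_discMeasure_tupleWeight (hMDP : MDPAssumptions P r μ0 γ dD) :
    IsProbabilityMeasure (discMeasure (tupleWeight P dD)) :=
  isProbabilityMeasure_discMeasure (tupleWeight_nonneg hMDP)
    (sum_tupleWeight hMDP ▸ hasSum_fintype _)

theorem isProbabilityMeasure_dataMeasure (hMDP : MDPAssumptions P r μ0 γ dD) (n n0 : ℕ) :
    IsProbabilityMeasure (dataMeasure P dD μ0 n n0) := by
  have := isProbabilityMeasure_discMeasure_init hMDP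
  have := isProbabilityMeasure_discMeasure_tupleWeight hMDP
  unfold dataMeasure
  infer_instance

variable [MeasurableSingletonClass S] [MeasurableSingletonClass A]

theorem lag_eq_integral (hMDP : MDPAssumptions P r μ0 γ dD) (f : ℝ → ℝ) (α : ℝ) (v : S → ℝ)
    (w : S → A → ℝ) :
    Lag P r μ0 γ dD f α v w
      = (1 - γ) * ∫ s, v s ∂(discMeasure μ0)
        + ∫ x, tupleLag r γ f α v w x ∂(discMeasure (tupleWeight P dD)) := by
  rw [integral_discMeasure fun s => (hMDP.μ0_pos s).le,
    integral_discMeasure (tupleWeight_nonneg hMDP), sum_tupleWeight_mul]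
  simp only [sum_mul_tupleLag (hMDP.P_sum _ _), Lag, mul_sub, Finset.sum_sub_distrib,
    Finset.mul_sum, mul_left_comm α]
  ring

theorem abs_empLag_sub_lag_le (hMDP : MDPAssumptions P r μ0 γ dD) (f : ℝ → ℝ) (α : ℝ) {n n0 : ℕ}
    (D : Fin n → (S × A) × S) (D0 : Fin n0 → S) (v : S → ℝ) (w : S → A → ℝ) :
    |empLag r γ f α D D0 v w - Lag P r μ0 γ dD f α v w|
      ≤ (1 - γ) * |𝔼 j, v (D0 j) - ∫ s, v s ∂(discMeasure μ0)|
        + |𝔼 i, tupleLag r γ f α v w (D i)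
            - ∫ x, tupleLag r γ f α v w x ∂(discMeasure (tupleWeight P dD))| := by
  rw [empLag_eq_expect, lag_eq_integral hMDP, add_sub_add_comm, ← mul_sub]
  refine (abs_add_le _ _).trans_eq ?_
  rw [abs_mul, abs_of_nonneg (sub_nonneg.2 hMDP.γ_lt_one.le)]

variable {f : ℝ → ℝ} {α Bw Bf Bv δ : ℝ} {V : Finset (S → ℝ)} {W : Finset (S → A → ℝ)} {n n0 : ℕ}

theorem measureReal_exists_lt_abs_expect_tupleLag_le (hMDP : MDPAssumptions P r μ0 γ dD)
    (hα : 0 ≤ α) (hf : ∀ x, 0 ≤ x → x ≤ Bw → |f x| ≤ Bf) (hV : ∀ v ∈ V, ∀ s, |v s| ≤ Bv)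
    (hW : ∀ w ∈ W, ∀ s a, 0 ≤ w s a ∧ w s a ≤ Bw) (hn : 0 < n) (hδ : 0 < δ) :
    (Measure.pi fun _ : Fin n => discMeasure (tupleWeight P dD)).real {D | ∃ k ∈ V ×ˢ W,
        (α * Bf + Bw * ((1 + γ) * Bv + 1)) * √(2 * Real.log (4 * (V.card * W.card) / δ) / n)
          < |𝔼 i, tupleLag r γ f α k.1 k.2 (D i)
              - ∫ x, tupleLag r γ f α k.1 k.2 x ∂(discMeasure (tupleWeight P dD))|} ≤ δ / 2 := by
  have := isProbabilityMeasure_discMeasure_tupleWeight hMDP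
  have : Nonempty (Fin n) := Fin.pos_iff_nonempty.1 hn
  have hr : ∀ s a, |r s a| ≤ 1 := fun s a =>
    (abs_of_nonneg (hMDP.r_nonneg s a)).trans_le (hMDP.r_le_one s a)
  have hbound : ∀ k ∈ V ×ˢ W, ∀ x,
      |tupleLag r γ f α k.1 k.2 x| ≤ α * Bf + Bw * ((1 + γ) * Bv + 1) := fun k hk => by
    obtain ⟨hv, hw⟩ := Finset.mem_product.1 hk
    exact abs_tupleLag_le hr hMDP.γ_nonneg hα hf (hV _ hv) (hW _ hw)
  have hoeffding := measureReal_pi_exists_lt_abs_expect_sub_integral_le (ι := Fin n)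
    (μ := discMeasure (tupleWeight P dD)) (fun _ _ => Measurable.of_discrete.aemeasurable)
    hbound (half_pos hδ)
  rwa [Fintype.card_fin, Finset.card_product, Nat.cast_mul,
    show 2 * ((V.card : ℝ) * W.card) / (δ / 2) = 4 * (V.card * W.card) / δ by ring] at hoeffding

theorem measureReal_exists_epsStat_lt_abs_empLag_sub_lag_le (hMDP : MDPAssumptions P r μ0 γ dD)
    (hα : 0 ≤ α) (hf : ∀ x, 0 ≤ x → x ≤ Bw → |f x| ≤ Bf) (hV : ∀ v ∈ V, ∀ s, |v s| ≤ Bv)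
    (hW : ∀ w ∈ W, ∀ s a, 0 ≤ w s a ∧ w s a ≤ Bw) (hn : 0 < n) (hn0 : 0 < n0) (hδ : 0 < δ) :
    (dataMeasure P dD μ0 n n0).real {ω | ∃ v ∈ V, ∃ w ∈ W,
        epsStat γ α Bv Bf Bw ((1 + γ) * Bv + 1) δ V.card W.card n n0
          < |empLag r γ f α ω.1 ω.2 v w - Lag P r μ0 γ dD f α v w|} ≤ δ := by
  have := isProbabilityMeasure_discMeasure_init hMDP
  have := isProbabilityMeasure_discMeasure_tupleWeight hMDP
  have := isProbabilityMeasure_dataMeasure hMDP n n0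
  refine (measureReal_mono ?_).trans <| (measureReal_prod_or_le _ _ _ _).trans <|
    (add_le_add (measureReal_exists_lt_abs_expect_tupleLag_le hMDP hα hf hV hW hn hδ)
      (measureReal_exists_lt_abs_expect_init_le hMDP hV hn0 hδ)).trans_eq (add_halves δ)
  rintro ω ⟨v, hv, w, hw, hlt⟩
  by_contra hnot
  simp only [Set.mem_ofPred_eq, not_or, not_exists, not_and, not_lt] at hnot
  obtain ⟨htuple, hinit⟩ := hnot
  refine hlt.not_ge <| (abs_empLag_sub_lag_le hMDP f α ω.1 ω.2 v w).trans ?_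
  rw [epsStat, mul_assoc]
  exact add_le_add (mul_le_mul_of_nonneg_left (hinit v hv) (sub_nonneg.2 hMDP.γ_lt_one.le))
    (htuple (v, w) (Finset.mk_mem_product hv hw))

end UniformConvergence

theorem stmt15_general
    {S A : Type*} [Fintype S] [Fintype A] [MeasurableSpace S] [MeasurableSpace A]
    [MeasurableSingletonClass S] [MeasurableSingletonClass A]
    {P : S → A → S → ℝ} {r : S → A → ℝ} {μ0 : S → ℝ} {γ : ℝ} {dD : S → A → ℝ}
    (hMDP : MDPAssumptions P r μ0 γ dD) {f : ℝ → ℝ} {α δ : ℝ} (hα : 0 ≤ α) (hδ : 0 < δ)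
    {Bw Bf Bv : ℝ} (hf : ∀ x, 0 ≤ x → x ≤ Bw → |f x| ≤ Bf)
    {V : Finset (S → ℝ)} {W : Finset (S → A → ℝ)}
    (hV : ∀ v ∈ V, ∀ s, |v s| ≤ Bv) (hW : ∀ w ∈ W, ∀ s a, 0 ≤ w s a ∧ w s a ≤ Bw)
    {vst : S → ℝ} {wst : S → A → ℝ} (hvst : vst ∈ V) (hwst : wst ∈ W)
    (hmin : ∀ v ∈ V, Lag P r μ0 γ dD f α vst wst ≤ Lag P r μ0 γ dD f α v wst)
    {n n0 : ℕ} (hn : 0 < n) (hn0 : 0 < n0) :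
    1 - ENNReal.ofReal δ ≤
      dataMeasure P dD μ0 n n0 {ω | ∀ vhat what, IsProRLOutput r γ f α V W ω.1 ω.2 vhat what →
        Lag P r μ0 γ dD f α vst wst - Lag P r μ0 γ dD f α vst what
          ≤ 2 * epsStat γ α Bv Bf Bw ((1 + γ) * Bv + 1) δ V.card W.card n n0} := by
  have := isProbabilityMeasure_dataMeasure hMDP n n0
  refine one_sub_ofReal_le_of_measureReal_compl_le <| (measureReal_mono ?_).trans <|
    measureReal_exists_epsStat_lt_abs_empLag_sub_lag_le hMDP hα hf hV hW hn hn0 hδ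
  refine Set.compl_subset_comm.1 fun ω hclose vhat what hout => ?_
  simp only [Set.mem_compl_iff, Set.mem_ofPred_eq, not_exists, not_and, not_lt] at hclose
  have hmaxmin : IsMaxMinOn (empLag r γ f α ω.1 ω.2) V W vhat what := hout
  exact hmaxmin.sub_le_two_mul hmin hvst hwst hclose

/-- Lemma 7: `L_α(v*_α, w*_α) − L_α(v*_α, ŵ) ≤ 2 ε_stat`. -/
theorem stmt15
    {S A : Type*} [Fintype S] [Fintype A] [Nonempty S] [Nonempty A]
    [MeasurableSpace S] [MeasurableSpace A]
    [MeasurableSingletonClass S] [MeasurableSingletonClass A]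
    (P : S → A → S → ℝ) (r : S → A → ℝ) (μ0 : S → ℝ) (γ : ℝ) (dD : S → A → ℝ)
    (hMDP : MDPAssumptions P r μ0 γ dD)
    (f f' : ℝ → ℝ) (α δ : ℝ) (hα : 0 < α) (hδ0 : 0 < δ) (hδ1 : δ < 1)
    (Mf Bw Bf' Bf Bv Be : ℝ)
    (hreg : RegAssumptions f f' Mf Bw Bf' Bf) (hfnn : ∀ x, 0 ≤ f x)
    (hBv : Bv = (α * Bf' + 1) / (1 - γ)) (hBe : Be = (1 + γ) * Bv + 1)
    (vst : S → ℝ) (wst : S → A → ℝ)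
    (hsad : IsSaddle P r μ0 γ dD f α vst wst)
    (V : Finset (S → ℝ)) (W : Finset (S → A → ℝ))
    (hA1 : ∀ s a, dstar dD wst s a ≤ Bw * dD s a)
    (hA2 : vst ∈ V) (hA3 : wst ∈ W)
    (hA4 : ∀ w ∈ W, ∀ s a, 0 ≤ w s a ∧ w s a ≤ Bw)
    (hA6 : ∀ v ∈ V, ∀ s, |v s| ≤ Bv)
    (n n0 : ℕ) (hn : 0 < n) (hn0 : 0 < n0)
    (vhat : (Fin n → (S × A) × S) × (Fin n0 → S) → S → ℝ)
    (what : (Fin n → (S × A) × S) × (Fin n0 → S) → S → A → ℝ)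
    (halg : ∀ ω, IsProRLOutput r γ f α V W ω.1 ω.2 (vhat ω) (what ω)) :
    1 - ENNReal.ofReal δ ≤
      dataMeasure P dD μ0 n n0 {ω |
        Lag P r μ0 γ dD f α vst wst - Lag P r μ0 γ dD f α vst (what ω)
          ≤ 2 * epsStat γ α Bv Bf Bw Be δ V.card W.card n n0 } := by
  subst hBe
  exact (stmt15_general hMDP hα.le hδ0 hreg.f_bdd hA6 hA4 hA2 hA3 (fun v _ => hsad.2.1 v)
    hn hn0).trans (measure_mono fun ω hω => hω _ _ (halg ω))

end ProRL
end

section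
/- Let d^D be a distribution on S×A with conditionals π_D(a|s), let w*: S×A → ℝ₊ be such that d*(s,a) = w*(s,a)·d^D(s,a) is a probability distribution on S×A with induced policy π*(a|s) = d*(s,a)/Σ_{a'} d*(s,a') (uniform when the denominator is 0), and let ŵ: S×A → ℝ₊ be arbitrary with extracted policy π̂(a|s) = ŵ(s,a)π_D(a|s)/Σ_{a'} ŵ(s,a')π_D(a'|s) (uniform when the denominator is 0). Then E_{s∼d*}[‖π*(·|s) − π̂(·|s)‖₁] ≤ 2·‖ŵ − w*‖_{2,d^D}. -/
open MeasureTheory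
open scoped BigOperators ENNReal

namespace ProRL

variable {S A : Type*} [Fintype S] [Fintype A]

/-!
At a fixed state let `p = d*` and `q = ŵ·d^D`, with masses `P`, `Q` and normalizations `π_p`, `π_q`.
Multiplying by `P` cancels the denominators: `P (π_p - π_q) = (p - q) - (P - Q) π_q`. Since
`|P - Q| ≤ ‖p - q‖₁`, the `ℓ¹` norm of the right side is at most `2 ‖p - q‖₁`. Where `d^D` charges
the state, `π̂` is exactly `π_q`, because the mass of `d^D` separating `π_D` from `d^D` cancels;
elsewhere `P = 0`. Summing over states bounds the error by twice the `L¹(d^D)` norm of `ŵ - w*`, and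
Jensen's inequality passes to `L²(d^D)`.
-/

section PerState

variable {S A : Type*} [Fintype A] {s : S}

lemma normPolicy_nonneg {d : S → A → ℝ} (hd : 0 ≤ d s) (a : A) : 0 ≤ normPolicy d s a := by
  unfold normPolicy
  split_ifs with hmass
  · exact div_nonneg (hd a) hmass.le
  · positivity

lemma sum_normPolicy_le_one (d : S → A → ℝ) (s : S) : ∑ a : A, normPolicy d s a ≤ 1 := by
  unfold normPolicy
  split_ifs with hmass
  · rw [← Finset.sum_div, div_self hmass.ne']
  · simpa using mul_inv_le_one (a := (Fintype.card A : ℝ))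

lemma sum_mul_normPolicy {d : S → A → ℝ} (hd : 0 ≤ d s) (a : A) :
    (∑ a' : A, d s a') * normPolicy d s a = d s a := by
  rcases (Fintype.sum_nonneg hd).eq_or_lt' with hzero | hpos
  · have hda : d s a = 0 := congrFun ((Fintype.sum_eq_zero_iff_of_nonneg hd).1 hzero) a
    rw [hzero, hda, zero_mul]
  · rw [normPolicy, if_pos hpos, mul_div_cancel₀ _ hpos.ne']

lemma sum_mul_abs_normPolicy_sub_le {p q : S → A → ℝ} (hp : 0 ≤ p s) (hq : 0 ≤ q s)
    (a : A) :
    (∑ a' : A, p s a') * |normPolicy p s a - normPolicy q s a|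
      ≤ |p s a - q s a| + |∑ a' : A, p s a' - ∑ a' : A, q s a'| * normPolicy q s a := by
  have hsplit : (∑ a' : A, p s a') * (normPolicy p s a - normPolicy q s a)
      = (p s a - q s a) - (∑ a' : A, p s a' - ∑ a' : A, q s a') * normPolicy q s a := by
    linear_combination sum_mul_normPolicy hp a - sum_mul_normPolicy hq a
  calc (∑ a' : A, p s a') * |normPolicy p s a - normPolicy q s a|
      = |(p s a - q s a) - (∑ a' : A, p s a' - ∑ a' : A, q s a') * normPolicy q s a| := by
        rw [← hsplit, abs_mul, abs_of_nonneg (Fintype.sum_nonneg hp)]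
    _ ≤ |p s a - q s a| + |(∑ a' : A, p s a' - ∑ a' : A, q s a') * normPolicy q s a| :=
        abs_sub _ _
    _ = |p s a - q s a| + |∑ a' : A, p s a' - ∑ a' : A, q s a'| * normPolicy q s a := by
        rw [abs_mul, abs_of_nonneg (normPolicy_nonneg hq a)]

lemma abs_sum_sub_sum_le_l1Pol (p q : S → A → ℝ) (s : S) :
    |∑ a : A, p s a - ∑ a : A, q s a| ≤ l1Pol p q s := by
  rw [← Finset.sum_sub_distrib]
  exact Finset.abs_sum_le_sum_abs _ _

lemma sum_mul_l1Pol_normPolicy_le {p q : S → A → ℝ} (hp : 0 ≤ p s) (hq : 0 ≤ q s) :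
    (∑ a : A, p s a) * l1Pol (normPolicy p) (normPolicy q) s ≤ 2 * l1Pol p q s := by
  calc (∑ a : A, p s a) * l1Pol (normPolicy p) (normPolicy q) s
      ≤ ∑ a : A, (|p s a - q s a|
          + |∑ a' : A, p s a' - ∑ a' : A, q s a'| * normPolicy q s a) := by
        rw [l1Pol, Finset.mul_sum]
        exact Finset.sum_le_sum fun a _ => sum_mul_abs_normPolicy_sub_le hp hq a
    _ = l1Pol p q s
          + |∑ a : A, p s a - ∑ a : A, q s a| * ∑ a : A, normPolicy q s a := by
        rw [Finset.sum_add_distrib, ← Finset.mul_sum, l1Pol]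
    _ ≤ l1Pol p q s + l1Pol p q s * 1 := by
        have hmass := abs_sum_sub_sum_le_l1Pol p q s
        exact add_le_add_right (mul_le_mul hmass (sum_normPolicy_le_one q s)
          (Fintype.sum_nonneg (normPolicy_nonneg hq)) ((abs_nonneg _).trans hmass)) _
    _ = 2 * l1Pol p q s := by ring

lemma l1Pol_dstar {dD : S → A → ℝ} (hdD : 0 ≤ dD s) (w w' : S → A → ℝ) :
    l1Pol (dstar dD w) (dstar dD w') s = ∑ a : A, dD s a * |w' s a - w s a| := by
  refine Finset.sum_congr rfl fun a _ => ?_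
  rw [dstar, dstar, ← sub_mul, abs_mul, abs_of_nonneg (hdD a), mul_comm, abs_sub_comm]

lemma extractPolicy_behPolicy {dD : S → A → ℝ} (hpos : 0 < ∑ a : A, dD s a) (w : S → A → ℝ) :
    extractPolicy (behPolicy dD) w s = normPolicy (dstar dD w) s := by
  have hnum (a : A) : w s a * behPolicy dD s a = dstar dD w s a / ∑ a' : A, dD s a' := by
    rw [behPolicy, normPolicy, if_pos hpos, dstar, mul_div_assoc]
  funext a
  simp only [extractPolicy, hnum, ← Finset.sum_div]
  exact if_congr (div_pos_iff_of_pos_right hpos) (div_div_div_cancel_right₀ hpos.ne' _ _) rfl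

lemma sum_dstar_mul_l1Pol_extractPolicy_le {dD w w' : S → A → ℝ} (hdD : 0 ≤ dD s)
    (hw : 0 ≤ w s) (hw' : 0 ≤ w' s) :
    (∑ a : A, dstar dD w s a)
        * l1Pol (normPolicy (dstar dD w)) (extractPolicy (behPolicy dD) w') s
      ≤ 2 * ∑ a : A, dD s a * |w' s a - w s a| := by
  rcases (Fintype.sum_nonneg hdD).eq_or_lt' with hzero | hpos
  · have hdDs : ∀ a, dD s a = 0 := congrFun ((Fintype.sum_eq_zero_iff_of_nonneg hdD).1 hzero)
    simp [dstar, hdDs]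
  · rw [l1Pol, extractPolicy_behPolicy hpos, ← l1Pol_dstar hdD]
    exact sum_mul_l1Pol_normPolicy_le (fun a => mul_nonneg (hw a) (hdD a))
      (fun a => mul_nonneg (hw' a) (hdD a))

end PerState

lemma sum_mul_abs_le_l2nrm {dD : S → A → ℝ} (hdD : ∀ s a, 0 ≤ dD s a)
    (hdD_sum : ∑ s : S, ∑ a : A, dD s a = 1) (g : S → A → ℝ) :
    ∑ s : S, ∑ a : A, dD s a * |g s a| ≤ l2nrm dD g := by
  refine Real.le_sqrt_of_sq_le ?_
  simp only [← Fintype.sum_prod_type'] at hdD_sum ⊢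
  simpa only [sq_abs] using Real.pow_arith_mean_le_arith_mean_pow Finset.univ
    (fun x : S × A => dD x.1 x.2) (fun x => |g x.1 x.2|) (fun x _ => hdD x.1 x.2) hdD_sum
    (fun x _ => abs_nonneg (g x.1 x.2)) 2

theorem stmt17_general {dD w w' : S → A → ℝ} (hdD : ∀ s a, 0 ≤ dD s a)
    (hw : ∀ s a, 0 ≤ w s a) (hw' : ∀ s a, 0 ≤ w' s a) :
    expL1 (dstar dD w) (normPolicy (dstar dD w)) (extractPolicy (behPolicy dD) w')
      ≤ 2 * ∑ s : S, ∑ a : A, dD s a * |w' s a - w s a| := by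
  rw [expL1, Finset.mul_sum]
  exact Finset.sum_le_sum fun s _ =>
    sum_dstar_mul_l1Pol_extractPolicy_le (hdD s) (hw s) (hw' s)

/-- Lemma 9: policy-extraction error is controlled by the
weighted `L²` error of the density ratio. -/
theorem stmt17
    {S A : Type*} [Fintype S] [Fintype A] [Nonempty A]
    (dD : S → A → ℝ) (hdD0 : ∀ s a, 0 ≤ dD s a)
    (hdD1 : ∑ s : S, ∑ a : A, dD s a = 1)
    (wst : S → A → ℝ) (hwst0 : ∀ s a, 0 ≤ wst s a)
    (hdst1 : ∑ s : S, ∑ a : A, dstar dD wst s a = 1)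
    (what : S → A → ℝ) (hwhat0 : ∀ s a, 0 ≤ what s a) :
    expL1 (dstar dD wst) (normPolicy (dstar dD wst))
        (extractPolicy (behPolicy dD) what)
      ≤ 2 * l2nrm dD (fun s a => what s a - wst s a) :=
  (stmt17_general hdD0 hwst0 hwhat0).trans <|
    mul_le_mul_of_nonneg_left (sum_mul_abs_le_l2nrm hdD0 hdD1 _) zero_le_two

end ProRL
end
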